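/- (Subcritical Sobolev inequality, Lemma 3.1.) Let 2 ≤ p < 2Q/(Q-2). There exists a constant C > 0 such that for every smooth compactly supported function u : ℝ^m × ℝ^n → ℝ, ∫ |∇_G u|² dx dt ≥ C (∫ |u|^p · U^{2Q/(Q-2) − p} dx dt)^{2/p}. -/

import Mathlib

/-!
Write `Q = m + 2n` and `p* = 2Q/(Q-2)`. The inequality follows from a weak-type Sobolev inequality
`∫_E |u| ≤ C ‖∇_G u‖₂ |E|^(1 - 1/p*)` for all sets `E` of finite measure, together with the decay
of the weight; no endpoint (Folland-Stein) inequality and no sharp constant is needed.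

*Pseudo-Poincaré inequality* (`moveCost_gmul`). The fields `X_j` generate right translations of the
step-two group `gmul`, which preserve Lebesgue measure, so right translation by `(v, 0)` moves `u`
by at most `|v| ‖∇_G u‖₂` in `L²`. For a horizontal vector `a` the H-type condition makes the
commutator of `a` and `(A k)ᵀ a` equal to the central element `|a|² e_k`. Hence right translation by
an element of a box of homogeneous size `r` is a composition of boundedly many horizontal moves of
length `O(r)`, and displaces `u` by `O(r) ‖∇_G u‖₂` in `L²`.

*Weak-type inequality* (`weakBound_energy`). Compare `u` on `E` with its right translates by a box
`B` whose measure is a fixed multiple of `|E|`. If `M` is any admissible constant in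
`∫_E |u| ≤ M |E|^(1 - 1/p*)`, then the average of `|u|` over a translate of `B` is controlled by `M`,
the difference is controlled by the pseudo-Poincaré inequality, and the multiple can be chosen so
that `K ‖∇_G u‖₂ + M/2` is admissible too (`WeakBound.step`). Iterating from a finite `M` gives
`2 K ‖∇_G u‖₂`.

*Weighted strong bound* (`exists_lintegral_weighted_le`). The superlevel sets of `|u|` have measure
at most `(M/t)^p*`. For the measure `U^(p* - p) dx dt`, integrating the layer-cake formula over
`t > 1` uses `p < p*` and `U ≤ 1`; over `t < 1` it uses Hölder's inequality and the integrability of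
`U^(3p*/4)` (`lintegral_hgauge_ne_top`).
-/

open MeasureTheory Real Filter Matrix

noncomputable section

abbrev Pt (m n : ℕ) := (Fin m → ℝ) × (Fin n → ℝ)

def IsHType (m n : ℕ) (A : Fin n → Matrix (Fin m) (Fin m) ℝ) : Prop :=
  (∀ k, (A k)ᵀ = -(A k)) ∧ (∀ k, A k * (A k)ᵀ = 1) ∧
    ∀ i j, i ≠ j → A i * A j + A j * A i = 0

def Qh (m n : ℕ) : ℝ := m + 2 * n

def Xvf (m n : ℕ) (A : Fin n → Matrix (Fin m) (Fin m) ℝ) (j : Fin m)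
    (u : Pt m n → ℝ) (p : Pt m n) : ℝ :=
  fderiv ℝ u p (Pi.single j 1, 0)
    + (1/2) * ∑ k : Fin n, (∑ i : Fin m, A k i j * p.1 i) * fderiv ℝ u p (0, Pi.single k 1)

def gradSq (m n : ℕ) (A : Fin n → Matrix (Fin m) (Fin m) ℝ)
    (u : Pt m n → ℝ) (p : Pt m n) : ℝ :=
  ∑ j : Fin m, (Xvf m n A j u p) ^ 2

def subLap (m n : ℕ) (A : Fin n → Matrix (Fin m) (Fin m) ℝ)
    (u : Pt m n → ℝ) (p : Pt m n) : ℝ :=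
  ∑ j : Fin m, Xvf m n A j (Xvf m n A j u) p

def Uf (m n : ℕ) (p : Pt m n) : ℝ :=
  ((1 + (∑ i, p.1 i ^ 2) / 4) ^ 2 + ∑ r, p.2 r ^ 2) ^ (-(Qh m n - 2) / 4)

def Sconst (m n : ℕ) : ℝ :=
  (4 : ℝ) ^ (-(2 * (n : ℝ)) / Qh m n) * ((m : ℝ) * (Qh m n - 2)) *
    π ^ (((m : ℝ) + n) / Qh m n) *
    (Real.Gamma (((m : ℝ) + n) / 2) / Real.Gamma ((m : ℝ) + n)) ^ ((2 : ℝ) / Qh m n)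


/-! ### The group law and its brackets -/

/-- The bilinear form `(x, y) ↦ (xᵀ A k y)_k`, written in the form in which it occurs in `Xvf`. -/
def brk (m n : ℕ) (A : Fin n → Matrix (Fin m) (Fin m) ℝ) (x y : Fin m → ℝ) : Fin n → ℝ :=
  fun k => ∑ j : Fin m, (∑ i : Fin m, A k i j * x i) * y j

/-- The group product for which the fields `Xvf` are left invariant. -/
def gmul (m n : ℕ) (A : Fin n → Matrix (Fin m) (Fin m) ℝ) (g h : Pt m n) : Pt m n :=
  (g.1 + h.1, g.2 + h.2 + (1 / 2 : ℝ) • brk m n A g.1 h.1)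

/-- The Dirichlet energy `∫ |∇_G u|²`, as an extended nonnegative number. -/
def energy (m n : ℕ) (A : Fin n → Matrix (Fin m) (Fin m) ℝ) (u : Pt m n → ℝ) : ENNReal :=
  ∫⁻ g, ENNReal.ofReal (gradSq m n A u g)

section Bracket

variable {m n : ℕ} {A : Fin n → Matrix (Fin m) (Fin m) ℝ}

lemma brk_add_left (x y z : Fin m → ℝ) :
    brk m n A (x + y) z = brk m n A x z + brk m n A y z := by
  ext k
  simp only [brk, Pi.add_apply, mul_add, Finset.sum_add_distrib, add_mul]

lemma brk_add_right (x y z : Fin m → ℝ) :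
    brk m n A x (y + z) = brk m n A x y + brk m n A x z := by
  ext k
  simp only [brk, Pi.add_apply, mul_add, Finset.sum_add_distrib]

lemma brk_smul_left (c : ℝ) (x y : Fin m → ℝ) :
    brk m n A (c • x) y = c • brk m n A x y := by
  ext k
  simp only [brk, Pi.smul_apply, smul_eq_mul, Finset.mul_sum, Finset.sum_mul]
  exact Finset.sum_congr rfl fun j _ => Finset.sum_congr rfl fun i _ => by ring

lemma brk_smul_right (c : ℝ) (x y : Fin m → ℝ) :
    brk m n A x (c • y) = c • brk m n A x y := by
  ext k
  simp only [brk, Pi.smul_apply, smul_eq_mul, Finset.mul_sum, Finset.sum_mul]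
  exact Finset.sum_congr rfl fun j _ => Finset.sum_congr rfl fun i _ => by ring

lemma brk_eq_dotProduct (x y : Fin m → ℝ) (k : Fin n) :
    brk m n A x y k = x ⬝ᵥ (A k *ᵥ y) := by
  simp only [brk, dotProduct, mulVec, Finset.mul_sum, Finset.sum_mul]
  rw [Finset.sum_comm]
  exact Finset.sum_congr rfl fun j _ => Finset.sum_congr rfl fun i _ => by ring

lemma brk_swap (hA : IsHType m n A) (x y : Fin m → ℝ) :
    brk m n A x y = -brk m n A y x := by
  ext k
  rw [Pi.neg_apply, brk_eq_dotProduct, brk_eq_dotProduct, dotProduct_mulVec, ← mulVec_transpose,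
    hA.1 k, neg_mulVec, neg_dotProduct, dotProduct_comm]

lemma brk_self (hA : IsHType m n A) (x : Fin m → ℝ) : brk m n A x x = 0 := by
  have h := brk_swap hA x x
  ext k
  have := congrFun h k
  simp only [Pi.neg_apply, Pi.zero_apply] at this ⊢
  linarith

/-- The only place where anticommutation enters: for `l ≠ k` the matrix `A l * (A k)ᵀ` is
skew-symmetric, so the bracket of `x` with `(A k)ᵀ x` has only a `k`-th component. -/
lemma brk_transpose (hA : IsHType m n A) (x : Fin m → ℝ) (k : Fin n) :
    brk m n A x ((A k)ᵀ *ᵥ x) = Pi.single k (x ⬝ᵥ x) := by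
  ext l
  rw [brk_eq_dotProduct, mulVec_mulVec]
  by_cases h : l = k
  · subst h
    rw [hA.2.1 l, one_mulVec, Pi.single_eq_same]
  · rw [Pi.single_eq_of_ne h]
    have h1 : (A l * (A k)ᵀ)ᵀ = -(A l * (A k)ᵀ) := by
      have h3 := hA.2.2 l k h
      rw [transpose_mul, transpose_transpose, hA.1 l, hA.1 k, mul_neg, mul_neg, neg_neg]
      exact (neg_eq_of_add_eq_zero_right h3).symm ▸ by simp
    have h2 : x ⬝ᵥ ((A l * (A k)ᵀ) *ᵥ x) = -(x ⬝ᵥ ((A l * (A k)ᵀ) *ᵥ x)) := by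
      conv_lhs => rw [dotProduct_mulVec, ← mulVec_transpose, h1, neg_mulVec, neg_dotProduct,
        dotProduct_comm]
    linarith

lemma transpose_mulVec_dot_self (hA : IsHType m n A) (x : Fin m → ℝ) (k : Fin n) :
    ((A k)ᵀ *ᵥ x) ⬝ᵥ ((A k)ᵀ *ᵥ x) = x ⬝ᵥ x := by
  rw [dotProduct_mulVec, ← mulVec_transpose, transpose_transpose, mulVec_mulVec, hA.2.1 k,
    one_mulVec]

lemma continuous_brk_left (y : Fin m → ℝ) : Continuous fun x => brk m n A x y := by
  unfold brk; fun_prop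

lemma continuous_gmul : Continuous fun q : Pt m n × Pt m n => gmul m n A q.1 q.2 := by
  unfold gmul brk; fun_prop

/-- A translation of the first factor combined with a shear along the second one. -/
lemma measurePreserving_right (h : Pt m n) :
    MeasurePreserving (fun g => gmul m n A g h) := by
  have h1 := (measurePreserving_add_right (volume : Measure (Fin m → ℝ)) h.1).skew_product
    (μc := (volume : Measure (Fin n → ℝ))) (μd := (volume : Measure (Fin n → ℝ)))
    (g := fun x t => t + (h.2 + (1 / 2 : ℝ) • brk m n A x h.1))
    (by unfold brk; fun_prop)
    (Eventually.of_forall fun x => (measurePreserving_add_right volume _).map_eq)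
  convert h1 using 2 with g
  · simp [gmul, add_assoc]
  · rfl
  · rfl

lemma measurePreserving_left (g : Pt m n) :
    MeasurePreserving (fun h => gmul m n A g h) := by
  have h1 := (measurePreserving_add_left (volume : Measure (Fin m → ℝ)) g.1).skew_product
    (μc := (volume : Measure (Fin n → ℝ))) (μd := (volume : Measure (Fin n → ℝ)))
    (g := fun x t => t + (g.2 + (1 / 2 : ℝ) • brk m n A g.1 x))
    (by unfold brk; fun_prop)
    (Eventually.of_forall fun x => (measurePreserving_add_right volume _).map_eq)
  convert h1 using 2 with h
  · simp only [gmul, Prod.mk.injEq, true_and]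
    abel
  · rfl
  · rfl

/-- A combination of the horizontal fields is one directional derivative. -/
lemma sum_Xvf (u : Pt m n → ℝ) (q : Pt m n) (v : Fin m → ℝ) :
    ∑ j, v j * Xvf m n A j u q = fderiv ℝ u q (v, (1 / 2 : ℝ) • brk m n A q.1 v) := by
  have h1 : (v, (1 / 2 : ℝ) • brk m n A q.1 v) =
      ∑ j, v j • ((Pi.single j 1, 0) : Pt m n) +
      ∑ k, ((1 / 2 : ℝ) * brk m n A q.1 v k) • ((0, Pi.single k 1) : Pt m n) := by
    ext i <;> simp [Prod.fst_sum, Prod.snd_sum, Finset.sum_apply, Pi.single_apply]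
  rw [h1, map_add, map_sum, map_sum]
  simp only [map_smul, smul_eq_mul, Xvf, mul_add, Finset.sum_add_distrib, brk, Finset.mul_sum,
    Finset.sum_mul]
  congr 1
  rw [Finset.sum_comm]
  refine Finset.sum_congr rfl fun j _ => ?_
  refine Finset.sum_congr rfl fun i _ => ?_
  refine Finset.sum_congr rfl fun k _ => ?_
  ring

end Bracket

/-! ### The pseudo-Poincaré inequality -/

section PseudoPoincare

variable {m n : ℕ} {A : Fin n → Matrix (Fin m) (Fin m) ℝ}

lemma continuous_Xvf {u : Pt m n → ℝ} (hu : ContDiff ℝ (⊤ : ℕ∞) u) (j : Fin m) :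
    Continuous (Xvf m n A j u) := by
  have h (w : Pt m n) : Continuous fun q => fderiv ℝ u q w :=
    (hu.continuous_fderiv (by simp)).clm_apply continuous_const
  have h1 := h (Pi.single j 1, 0)
  have h2 (k : Fin n) := h (0, Pi.single k 1)
  unfold Xvf
  fun_prop

lemma continuous_gradSq {u : Pt m n → ℝ} (hu : ContDiff ℝ (⊤ : ℕ∞) u) :
    Continuous (gradSq m n A u) := by
  have h (j : Fin m) := continuous_Xvf (A := A) hu j
  unfold gradSq
  fun_prop

/-- The integral curves of left-invariant horizontal fields are straight lines: skew-symmetry makes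
the bracket with `v` constant along `s ↦ g * (s v, 0)`. -/
lemma hasDerivAt_horizontal (hA : IsHType m n A) {u : Pt m n → ℝ}
    (hu : ContDiff ℝ (⊤ : ℕ∞) u) (g : Pt m n) (v : Fin m → ℝ) (s : ℝ) :
    HasDerivAt (fun s : ℝ => u (gmul m n A g (s • v, 0)))
      (∑ j, v j * Xvf m n A j u (gmul m n A g (s • v, 0))) s := by
  have h1 : HasDerivAt (fun s : ℝ => gmul m n A g (s • v, 0))
      (v, (1 / 2 : ℝ) • brk m n A g.1 v) s := by
    have h2 : HasDerivAt (fun s : ℝ => g + s • ((v, (1 / 2 : ℝ) • brk m n A g.1 v) : Pt m n))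
        ((1 : ℝ) • ((v, (1 / 2 : ℝ) • brk m n A g.1 v) : Pt m n)) s :=
      ((hasDerivAt_id s).smul_const _).const_add g
    rw [one_smul] at h2
    convert h2 using 2 with s
    ext i
    · simp [gmul]
    · simp only [gmul, brk_smul_right, Prod.snd_add, Prod.smul_snd, Pi.add_apply, Pi.smul_apply,
        smul_eq_mul, Pi.zero_apply]
      ring
  rw [sum_Xvf]
  have h3 : brk m n A (gmul m n A g (s • v, 0)).1 v = brk m n A g.1 v := by
    simp only [gmul, brk_add_left, brk_smul_left, brk_self hA, smul_zero, add_zero]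
  rw [h3]
  exact ((hu.differentiable (by simp)) _).hasFDerivAt.comp_hasDerivAt s h1

lemma eLpNorm_two_sq {X : Type*} [MeasurableSpace X] (μ : Measure X) (f : X → ℝ) :
    eLpNorm f 2 μ ^ 2 = ∫⁻ x, ‖f x‖ₑ ^ 2 ∂μ := by
  have := eLpNorm_nnreal_pow_eq_lintegral (f := f) (μ := μ) (p := 2) (by norm_num)
  simpa using this

/-- Fundamental theorem of calculus along a horizontal segment, with Cauchy-Schwarz in the time
variable and in the horizontal directions. -/
lemma enorm_sub_sq_le (hA : IsHType m n A) {u : Pt m n → ℝ}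
    (hu : ContDiff ℝ (⊤ : ℕ∞) u) (g : Pt m n) (v : Fin m → ℝ) {r : ℝ}
    (hv : ∑ j, v j ^ 2 ≤ r ^ 2) :
    ‖u (gmul m n A g (v, 0)) - u g‖ₑ ^ 2 ≤
      ∫⁻ s in Set.Ioc (0 : ℝ) 1,
        ENNReal.ofReal (r ^ 2 * gradSq m n A u (gmul m n A g (s • v, 0))) := by
  set D : ℝ → ℝ := fun s => ∑ j, v j * Xvf m n A j u (gmul m n A g (s • v, 0)) with hD
  have hDc : Continuous D := by
    have h (j : Fin m) := continuous_Xvf (A := A) hu j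
    have h2 : Continuous fun s : ℝ => gmul m n A g (s • v, 0) := by
      unfold gmul brk; fun_prop
    exact continuous_finsetSum _ fun j _ => continuous_const.mul ((h j).comp h2)
  have h1 : ∫ s in (0 : ℝ)..1, D s = u (gmul m n A g (v, 0)) - u g := by
    rw [intervalIntegral.integral_eq_sub_of_hasDerivAt
      (fun s _ => hasDerivAt_horizontal hA hu g v s) (hDc.intervalIntegrable _ _)]
    congr 2
    · simp
    · ext i <;> simp [gmul, brk]
  rw [intervalIntegral.integral_of_le zero_le_one] at h1
  rw [← h1]
  have : IsProbabilityMeasure (volume.restrict (Set.Ioc (0 : ℝ) 1)) := ⟨by simp⟩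
  calc ‖∫ s in Set.Ioc (0 : ℝ) 1, D s‖ₑ ^ 2
      ≤ (eLpNorm D 1 (volume.restrict (Set.Ioc (0 : ℝ) 1))) ^ 2 := by
        rw [eLpNorm_one_eq_lintegral_enorm]
        gcongr
        exact enorm_integral_le_lintegral_enorm _
    _ ≤ (eLpNorm D 2 (volume.restrict (Set.Ioc (0 : ℝ) 1))) ^ 2 := by
        gcongr
        exact eLpNorm_le_eLpNorm_of_exponent_le (by norm_num) hDc.aestronglyMeasurable
    _ = ∫⁻ s in Set.Ioc (0 : ℝ) 1, ‖D s‖ₑ ^ 2 := eLpNorm_two_sq _ _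
    _ ≤ _ := by
        refine lintegral_mono fun s => ?_
        rw [Real.enorm_eq_ofReal_abs, ← ENNReal.ofReal_pow (abs_nonneg _), sq_abs]
        refine ENNReal.ofReal_le_ofReal ?_
        refine (Finset.sum_mul_sq_le_sq_mul_sq _ _ _).trans ?_
        exact mul_le_mul_of_nonneg_right hv (Finset.sum_nonneg fun j _ => sq_nonneg _)

lemma eLpNorm_horizontal_le (hA : IsHType m n A) {u : Pt m n → ℝ}
    (hu : ContDiff ℝ (⊤ : ℕ∞) u) (v : Fin m → ℝ) {r : ℝ} (hr : 0 ≤ r)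
    (hv : ∑ j, v j ^ 2 ≤ r ^ 2) :
    eLpNorm (fun g => u (gmul m n A g (v, 0)) - u g) 2 volume ≤
      ENNReal.ofReal r * energy m n A u ^ (1 / 2 : ℝ) := by
  have hgc : Continuous fun q : Pt m n × ℝ => gmul m n A q.1 (q.2 • v, 0) := by
    unfold gmul brk; fun_prop
  have h1 : eLpNorm (fun g => u (gmul m n A g (v, 0)) - u g) 2 volume ^ 2 ≤
      (ENNReal.ofReal r * energy m n A u ^ (1 / 2 : ℝ)) ^ 2 := by
    rw [eLpNorm_two_sq, mul_pow, ← ENNReal.rpow_natCast (_ ^ (1 / 2 : ℝ)), ← ENNReal.rpow_mul,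
      ← ENNReal.ofReal_pow hr]
    norm_num
    calc ∫⁻ g, ‖u (gmul m n A g (v, 0)) - u g‖ₑ ^ 2
        ≤ ∫⁻ g, ∫⁻ s in Set.Ioc (0 : ℝ) 1,
          ENNReal.ofReal (r ^ 2 * gradSq m n A u (gmul m n A g (s • v, 0))) :=
          lintegral_mono fun g => enorm_sub_sq_le hA hu g v hv
      _ = ∫⁻ s in Set.Ioc (0 : ℝ) 1, ∫⁻ g,
          ENNReal.ofReal (r ^ 2 * gradSq m n A u (gmul m n A g (s • v, 0))) := by
          refine lintegral_lintegral_swap ?_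
          refine Measurable.aemeasurable ?_
          refine Measurable.ennreal_ofReal ?_
          exact (continuous_const.mul ((continuous_gradSq hu).comp hgc)).measurable
      _ = ∫⁻ s in Set.Ioc (0 : ℝ) 1, ENNReal.ofReal (r ^ 2) * energy m n A u := by
          refine lintegral_congr fun s => ?_
          have hm : Measurable fun q => ENNReal.ofReal (r ^ 2 * gradSq m n A u q) :=
            (continuous_const.mul (continuous_gradSq hu)).measurable.ennreal_ofReal
          rw [(measurePreserving_right ((s • v, 0) : Pt m n)).lintegral_comp hm, energy,
            ← lintegral_const_mul' _ _ ENNReal.ofReal_ne_top]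
          exact lintegral_congr fun q => ENNReal.ofReal_mul (sq_nonneg r)
      _ = _ := by simp
  exact (ENNReal.pow_le_pow_left_iff (by norm_num)).1 h1

/-- `T` preserves Lebesgue measure and `‖u ∘ T - u‖_{L²} ≤ D`. -/
def MoveCost (u : Pt m n → ℝ) (T : Pt m n → Pt m n) (D : ENNReal) : Prop :=
  MeasurePreserving T ∧ eLpNorm (fun g => u (T g) - u g) 2 volume ≤ D

lemma MoveCost.comp {u : Pt m n → ℝ} (hu : Continuous u) {S T : Pt m n → Pt m n} {D D' : ENNReal}
    (hS : MoveCost u S D) (hT : MoveCost u T D') : MoveCost u (fun g => S (T g)) (D + D') := by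
  refine ⟨hS.1.comp hT.1, ?_⟩
  have hSm : AEStronglyMeasurable (fun g => u (S g) - u g) volume :=
    ((hu.measurable.comp hS.1.measurable).sub hu.measurable).aestronglyMeasurable
  have hTm : AEStronglyMeasurable (fun g => u (T g) - u g) volume :=
    ((hu.measurable.comp hT.1.measurable).sub hu.measurable).aestronglyMeasurable
  have h1 : (fun g => u (S (T g)) - u g) =
      ((fun g => u (S g) - u g) ∘ T) + fun g => u (T g) - u g := by
    ext g; simp
  rw [h1]
  refine (eLpNorm_add_le (hSm.comp_measurePreserving hT.1) hTm (by norm_num)).trans ?_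
  rw [eLpNorm_comp_measurePreserving hSm hT.1]
  exact add_le_add hS.2 hT.2

lemma moveCost_horizontal (hA : IsHType m n A) {u : Pt m n → ℝ}
    (hu : ContDiff ℝ (⊤ : ℕ∞) u) (v : Fin m → ℝ) {r : ℝ} (hr : 0 ≤ r)
    (hv : ∑ j, v j ^ 2 ≤ r ^ 2) :
    MoveCost u (fun g => gmul m n A g (v, 0)) (ENNReal.ofReal r * energy m n A u ^ (1 / 2 : ℝ)) :=
  ⟨measurePreserving_right _, eLpNorm_horizontal_le hA hu v hr hv⟩

lemma gmul_commutator (hA : IsHType m n A) (g : Pt m n) (a b : Fin m → ℝ) :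
    gmul m n A (gmul m n A (gmul m n A (gmul m n A g (a, 0)) (b, 0)) (-a, 0)) (-b, 0) =
      gmul m n A g (0, brk m n A a b) := by
  have h1 (x y : Fin m → ℝ) : brk m n A x (-y) = -brk m n A x y := by
    simpa using brk_smul_right (A := A) (-1) x y
  have h2 (x y : Fin m → ℝ) : brk m n A (-x) y = -brk m n A x y := by
    simpa using brk_smul_left (A := A) (-1) x y
  have h3 : brk m n A g.1 0 = 0 := by simpa using brk_smul_right (A := A) 0 g.1 0
  have h4 := brk_swap hA b a
  ext i
  · simp only [gmul, Pi.add_apply, Pi.neg_apply, Pi.zero_apply]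
    ring
  · simp only [gmul, brk_add_left, h1, h2, h3, h4, brk_self hA, Pi.add_apply, Pi.smul_apply,
      Pi.neg_apply, smul_eq_mul, smul_zero, add_zero]
    ring

/-- A central translation by `t` in one direction is a commutator of two horizontal translations of
length `√|t|`, hence a composition of four of them. -/
lemma moveCost_central_single (hm : 1 ≤ m) (hA : IsHType m n A) {u : Pt m n → ℝ}
    (hu : ContDiff ℝ (⊤ : ℕ∞) u) (k : Fin n) (t : ℝ) {r : ℝ} (hr : 0 ≤ r)
    (ht : |t| ≤ r ^ 2) :
    MoveCost u (fun g => gmul m n A g (0, Pi.single k t))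
      (4 * (ENNReal.ofReal r * energy m n A u ^ (1 / 2 : ℝ))) := by
  obtain ⟨a, ha⟩ : ∃ a : Fin m → ℝ, a ⬝ᵥ a = |t| :=
    ⟨Pi.single ⟨0, hm⟩ (√|t|), by simp [Real.mul_self_sqrt (abs_nonneg t)]⟩
  obtain ⟨b, hb, hab⟩ : ∃ b : Fin m → ℝ, b ⬝ᵥ b = |t| ∧ brk m n A a b = Pi.single k t := by
    rcases le_total 0 t with h | h
    · refine ⟨(A k)ᵀ *ᵥ a, by rw [transpose_mulVec_dot_self hA, ha], ?_⟩
      rw [brk_transpose hA, ha, abs_of_nonneg h]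
    · refine ⟨(-1 : ℝ) • ((A k)ᵀ *ᵥ a), ?_, ?_⟩
      · rw [dotProduct_smul, smul_dotProduct, transpose_mulVec_dot_self hA, ha]; simp
      · rw [brk_smul_right, brk_transpose hA, ha, abs_of_nonpos h, ← Pi.single_smul]; simp
  have sq (c : Fin m → ℝ) (hc : c ⬝ᵥ c = |t|) : ∑ j, c j ^ 2 ≤ r ^ 2 := by
    simp only [dotProduct, ← pow_two] at hc
    rw [hc]; exact ht
  have mc (c : Fin m → ℝ) (hc : c ⬝ᵥ c = |t|) := moveCost_horizontal hA hu c hr (sq c hc)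
  have hna : (-a) ⬝ᵥ (-a) = |t| := by simpa using ha
  have hnb : (-b) ⬝ᵥ (-b) = |t| := by simpa using hb
  have h := (mc _ hnb).comp hu.continuous ((mc _ hna).comp hu.continuous
    ((mc _ hb).comp hu.continuous (mc _ ha)))
  simp only [gmul_commutator hA, hab] at h
  convert h using 1
  ring

lemma moveCost_central (hm : 1 ≤ m) (hA : IsHType m n A) {u : Pt m n → ℝ}
    (hu : ContDiff ℝ (⊤ : ℕ∞) u) (t : Fin n → ℝ) {r : ℝ} (hr : 0 ≤ r)
    (ht : ∀ k, |t k| ≤ r ^ 2) (S : Finset (Fin n)) :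
    MoveCost u (fun g => gmul m n A g (0, ∑ k ∈ S, Pi.single k (t k)))
      (S.card * (4 * (ENNReal.ofReal r * energy m n A u ^ (1 / 2 : ℝ)))) := by
  have h0 (x : Fin m → ℝ) : brk m n A x 0 = 0 := by
    simpa using brk_smul_right (A := A) 0 x 0
  induction S using Finset.induction_on with
  | empty =>
    refine ⟨measurePreserving_right _, ?_⟩
    simp [gmul, h0]
  | insert k S hk ih =>
    have h := (moveCost_central_single hm hA hu k (t k) hr (ht k)).comp hu.continuous ih
    convert h using 1
    · ext g : 1
      simp only [gmul, h0, Finset.sum_insert hk, Prod.mk.injEq]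
      constructor
      · simp
      · simp only [smul_zero, add_zero]; abel
    · rw [Finset.card_insert_of_notMem hk]
      push_cast
      ring

/-- Pseudo-Poincaré inequality: right translation by an element of the box of homogeneous size `r`
displaces `u` in `L²` by at most `(m + 4n) r ‖∇_G u‖₂`. -/
lemma moveCost_gmul (hm : 1 ≤ m) (hA : IsHType m n A) {u : Pt m n → ℝ}
    (hu : ContDiff ℝ (⊤ : ℕ∞) u) (y : Pt m n) {r : ℝ} (hr : 0 ≤ r)
    (hv : ∀ j, |y.1 j| ≤ r) (ht : ∀ k, |y.2 k| ≤ r ^ 2) :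
    MoveCost u (fun g => gmul m n A g y)
      (ENNReal.ofReal ((m + 4 * n) * r) * energy m n A u ^ (1 / 2 : ℝ)) := by
  have h0 (x : Fin m → ℝ) : brk m n A x 0 = 0 := by
    simpa using brk_smul_right (A := A) 0 x 0
  have hm' : (1 : ℝ) ≤ m := by exact_mod_cast hm
  have h1 : ∑ j, y.1 j ^ 2 ≤ (m * r) ^ 2 := by
    calc ∑ j, y.1 j ^ 2 ≤ ∑ _j : Fin m, r ^ 2 :=
          Finset.sum_le_sum fun j _ => sq_le_sq' (by linarith [neg_abs_le (y.1 j), hv j])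
            ((le_abs_self _).trans (hv j))
      _ = m * r ^ 2 := by simp
      _ ≤ (m * r) ^ 2 := by nlinarith [sq_nonneg r, mul_nonneg (sub_nonneg.2 hm') (sq_nonneg r)]
  have h2 := (moveCost_central hm hA hu y.2 hr ht Finset.univ).comp hu.continuous
    (moveCost_horizontal hA hu y.1 (mul_nonneg (Nat.cast_nonneg m) hr) h1)
  convert h2 using 1
  · ext g : 1
    rw [Finset.univ_sum_single]
    simp only [gmul, h0, add_zero, smul_zero, Prod.mk.injEq, true_and]
    abel
  · rw [Finset.card_univ, Fintype.card_fin, add_mul, ENNReal.ofReal_add (by positivity)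
      (by positivity), mul_assoc (4 : ℝ), ENNReal.ofReal_mul (p := 4) (by norm_num),
      ENNReal.ofReal_mul (p := (n : ℝ)) (by positivity)]
    simp
    ring

end PseudoPoincare

/-! ### The weak-type Sobolev inequality -/

section WeakType

variable {m n : ℕ} {A : Fin n → Matrix (Fin m) (Fin m) ℝ}

/-- `M` bounds `u` in the Marcinkiewicz space of exponent `2Q/(Q-2)`, in its norm form: since
`1 - (Q-2)/(2Q) = 1/2 + 1/Q`, the condition reads `∫_E |u| ≤ M |E|^(1/2 + 1/Q)`. -/
def WeakBound (u : Pt m n → ℝ) (M : ENNReal) : Prop :=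
  ∀ E : Set (Pt m n), MeasurableSet E → volume E ≠ ⊤ →
    ∫⁻ g in E, ‖u g‖ₑ ≤ M * volume E ^ (1 / 2 + 1 / Qh m n)

/-- The anisotropic box `{|x_i| ≤ s, |t_k| ≤ s²}`. -/
def box (m n : ℕ) (s : ℝ) : Set (Pt m n) :=
  Set.Icc (fun _ => -s) (fun _ => s) ×ˢ Set.Icc (fun _ => -s ^ 2) (fun _ => s ^ 2)

lemma measurableSet_box (s : ℝ) : MeasurableSet (box m n s) :=
  measurableSet_Icc.prod measurableSet_Icc

lemma volume_box {s : ℝ} (hs : 0 < s) :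
    volume (box m n s) = ENNReal.ofReal (2 ^ (m + n) * s ^ Qh m n) := by
  have h1 : s ^ Qh m n = s ^ m * (s ^ 2) ^ n := by
    rw [← pow_mul, ← pow_add, ← Real.rpow_natCast, Qh]
    push_cast
    rfl
  rw [box, Measure.volume_eq_prod, Measure.prod_prod, Real.volume_Icc_pi, Real.volume_Icc_pi]
  simp only [sub_neg_eq_add, Finset.prod_const, Finset.card_univ, Fintype.card_fin]
  rw [← ENNReal.ofReal_pow (by positivity), ← ENNReal.ofReal_pow (by positivity),
    ← ENNReal.ofReal_mul (by positivity), h1, ← two_mul, ← two_mul, mul_pow, mul_pow, pow_add]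
  congr 1
  ring

lemma abs_le_of_mem_box {s : ℝ} {y : Pt m n} (hy : y ∈ box m n s) :
    (∀ j, |y.1 j| ≤ s) ∧ ∀ k, |y.2 k| ≤ s ^ 2 :=
  ⟨fun j => abs_le.2 ⟨hy.1.1 j, hy.1.2 j⟩, fun k => abs_le.2 ⟨hy.2.1 k, hy.2.2 k⟩⟩

lemma gmul_left_injective (g : Pt m n) : Function.Injective (fun y => gmul m n A g y) := by
  intro y y' h
  simp only [gmul, Prod.mk.injEq, add_right_inj] at h
  obtain ⟨h1, h2⟩ := h
  rw [h1] at h2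
  exact Prod.ext h1 (by simpa using h2)

/-- The bound passes to left translates of a set, because left translations preserve volume. -/
lemma setLIntegral_gmul_left_le {u : Pt m n → ℝ} {M : ENNReal} (hM : WeakBound u M)
    (g : Pt m n) {B : Set (Pt m n)} (hB : MeasurableSet B) (hB' : volume B ≠ ⊤) :
    ∫⁻ y in B, ‖u (gmul m n A g y)‖ₑ ≤ M * volume B ^ (1 / 2 + 1 / Qh m n) := by
  have hemb : MeasurableEmbedding (fun y => gmul m n A g y) :=
    (continuous_gmul.comp (Continuous.prodMk_right g)).measurableEmbedding
      (gmul_left_injective g)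
  have hmp := measurePreserving_left (A := A) g
  have hvol : volume ((fun y => gmul m n A g y) '' B) = volume B := by
    rw [← hmp.measure_preimage_emb hemb, Set.preimage_image_eq _ (gmul_left_injective g)]
  have h := hM _ (hemb.measurableSet_image.2 hB) (hvol ▸ hB')
  rw [hvol] at h
  rw [← hmp.setLIntegral_comp_emb hemb] at h
  exact h

/-- The ratio `N = |B| / |E|` between the averaging box and the given set, chosen so that
`N^(1/2 - 1/Q) = 2`; this produces the factor `1/2` in `WeakBound.step`. -/
def ratioConst (m n : ℕ) : ℝ := 2 ^ (1 / (1 / 2 - 1 / Qh m n))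

/-- The constant in front of `‖∇_G u‖₂` in `WeakBound.step`: the pseudo-Poincaré constant times the
size of a box of measure `ratioConst m n`. -/
def stepConst (m n : ℕ) : ℝ :=
  (m + 4 * n) * (ratioConst m n / 2 ^ (m + n)) ^ (1 / Qh m n)

lemma two_lt_Qh (hm : 1 ≤ m) (hn : 1 ≤ n) : 2 < Qh m n := by
  have h1 : (1 : ℝ) ≤ m := by exact_mod_cast hm
  have h2 : (1 : ℝ) ≤ n := by exact_mod_cast hn
  unfold Qh; linarith

/-- Self-improvement of an admissible constant: averaging over translates by a box of measure
proportional to `|E|` trades `M` for `M / 2` plus a multiple of `‖∇_G u‖₂`. -/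
lemma WeakBound.step (hm : 1 ≤ m) (hn : 1 ≤ n) (hA : IsHType m n A) {u : Pt m n → ℝ}
    (hu : ContDiff ℝ (⊤ : ℕ∞) u) {M : ENNReal} (hM : WeakBound u M) :
    WeakBound u (ENNReal.ofReal (stepConst m n) * energy m n A u ^ (1 / 2 : ℝ) + M / 2) := by
  intro E hE hEtop
  have hQ := two_lt_Qh hm hn
  have hQ0 : 0 < Qh m n := by linarith
  have hα : 0 < 1 / 2 - 1 / Qh m n := by
    rw [sub_pos]; exact one_div_lt_one_div_of_lt two_pos hQ
  set Q := Qh m n with hQdef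
  set θ : ℝ := 1 / 2 + 1 / Q with hθ
  have hθ0 : 0 < θ := by positivity
  rcases eq_or_ne (volume E) 0 with h0 | h0
  · rw [Measure.restrict_eq_zero.2 h0]; simp
  obtain ⟨e, he, hEe⟩ : ∃ e : ℝ, 0 < e ∧ volume E = ENNReal.ofReal e :=
    ⟨(volume E).toReal, ENNReal.toReal_pos h0 hEtop, (ENNReal.ofReal_toReal hEtop).symm⟩
  set N := ratioConst m n with hN
  have hN0 : 0 < N := by rw [hN, ratioConst]; positivity
  have hNθ : N ^ θ = N / 2 := by
    have h1 : N ^ (1 - θ) = 2 := by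
      rw [hN, ratioConst, ← Real.rpow_mul (by norm_num)]
      have : 1 / (1 / 2 - 1 / Qh m n) * (1 - θ) = 1 := by
        rw [hθ, hQdef]
        rw [show (1 : ℝ) - (1 / 2 + 1 / Qh m n) = 1 / 2 - 1 / Qh m n by ring]
        exact one_div_mul_cancel hα.ne'
      rw [this, Real.rpow_one]
    rw [Real.rpow_sub hN0, Real.rpow_one] at h1
    have := Real.rpow_pos_of_pos hN0 θ
    field_simp at h1 ⊢
    linarith
  -- The box of size `s` has measure `N * e`.
  set s : ℝ := (N * e / 2 ^ (m + n)) ^ (1 / Q) with hs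
  have hs0 : 0 < s := by positivity
  have hB : volume (box m n s) = ENNReal.ofReal (N * e) := by
    rw [volume_box hs0, hs, ← Real.rpow_mul (by positivity), one_div_mul_cancel hQ0.ne',
      Real.rpow_one]
    congr 1
    field_simp
  have hBm := measurableSet_box (m := m) (n := n) s
  set B := box m n s
  have hBtop : volume B ≠ ⊤ := by rw [hB]; exact ENNReal.ofReal_ne_top
  have hB0 : volume B ≠ 0 := by
    rw [hB]; exact (ENNReal.ofReal_pos.2 (by positivity)).ne'
  set G := energy m n A u ^ (1 / 2 : ℝ)
  have hcu := hu.continuous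
  have hcgm : Continuous fun q : Pt m n × Pt m n => u (gmul m n A q.1 q.2) :=
    hcu.comp continuous_gmul
  have key1 (y : Pt m n) (hy : y ∈ B) :
      ∫⁻ g in E, ‖u (gmul m n A g y) - u g‖ₑ ≤
        ENNReal.ofReal ((m + 4 * n) * s) * G * volume E ^ (1 / 2 : ℝ) := by
    have hm1 : AEStronglyMeasurable (fun g => u (gmul m n A g y) - u g) (volume.restrict E) :=
      ((hcgm.comp (Continuous.prodMk_left y)).sub hcu).aestronglyMeasurable
    have h1 := eLpNorm_le_eLpNorm_mul_rpow_measure_univ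
      (p := 1) (q := 2) (by norm_num) hm1
    rw [eLpNorm_one_eq_lintegral_enorm, Measure.restrict_apply_univ] at h1
    norm_num at h1
    refine h1.trans ?_
    gcongr
    refine (eLpNorm_mono_measure _ Measure.restrict_le_self).trans ?_
    obtain ⟨hy1, hy2⟩ := abs_le_of_mem_box hy
    exact (moveCost_gmul hm hA hu y hs0.le hy1 hy2).2
  have key2 : volume B * ∫⁻ g in E, ‖u g‖ₑ ≤
      volume B * (ENNReal.ofReal ((m + 4 * n) * s) * G * volume E ^ (1 / 2 : ℝ)) +
        volume E * (M * volume B ^ θ) := by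
    calc volume B * ∫⁻ g in E, ‖u g‖ₑ = ∫⁻ _y in B, ∫⁻ g in E, ‖u g‖ₑ := by
          rw [lintegral_const, Measure.restrict_apply_univ, mul_comm]
      _ ≤ ∫⁻ y in B, ((ENNReal.ofReal ((m + 4 * n) * s) * G * volume E ^ (1 / 2 : ℝ)) +
            ∫⁻ g in E, ‖u (gmul m n A g y)‖ₑ) := by
          refine setLIntegral_mono' hBm fun y hy => ?_
          have hmeas : Measurable fun g => ‖u (gmul m n A g y) - u g‖ₑ :=
            ((hcgm.comp (Continuous.prodMk_left y)).sub hcu).enorm.measurable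
          calc ∫⁻ g in E, ‖u g‖ₑ
              ≤ ∫⁻ g in E, (‖u (gmul m n A g y) - u g‖ₑ + ‖u (gmul m n A g y)‖ₑ) := by
                refine lintegral_mono fun g => ?_
                have := enorm_sub_le (a := u (gmul m n A g y))
                  (b := u (gmul m n A g y) - u g)
                rw [sub_sub_cancel] at this
                rw [add_comm]; exact this
            _ = (∫⁻ g in E, ‖u (gmul m n A g y) - u g‖ₑ) +
                  ∫⁻ g in E, ‖u (gmul m n A g y)‖ₑ := lintegral_add_left hmeas _
            _ ≤ _ := add_le_add_left (key1 y hy) _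
      _ = volume B * (ENNReal.ofReal ((m + 4 * n) * s) * G * volume E ^ (1 / 2 : ℝ)) +
            ∫⁻ y in B, ∫⁻ g in E, ‖u (gmul m n A g y)‖ₑ := by
          rw [lintegral_add_left measurable_const, lintegral_const, Measure.restrict_apply_univ,
            mul_comm (volume B)]
      _ = volume B * (ENNReal.ofReal ((m + 4 * n) * s) * G * volume E ^ (1 / 2 : ℝ)) +
            ∫⁻ g in E, ∫⁻ y in B, ‖u (gmul m n A g y)‖ₑ := by
          congr 1
          refine lintegral_lintegral_swap ?_
          exact (hcgm.comp continuous_swap).enorm.measurable.aemeasurable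
      _ ≤ _ := by
          gcongr
          calc ∫⁻ g in E, ∫⁻ y in B, ‖u (gmul m n A g y)‖ₑ
              ≤ ∫⁻ _g in E, M * volume B ^ θ :=
                lintegral_mono fun g => setLIntegral_gmul_left_le hM g hBm hBtop
            _ = _ := by rw [lintegral_const, Measure.restrict_apply_univ, mul_comm]
  have key3 : volume E * (M * volume B ^ θ) = volume B * (M / 2 * volume E ^ θ) := by
    have h2 : M / 2 = M * ENNReal.ofReal (1 / 2) := by
      rw [div_eq_mul_inv, one_div, ENNReal.ofReal_inv_of_pos two_pos]; simp
    have h3 : ENNReal.ofReal e * ENNReal.ofReal (N * e) ^ θ =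
        ENNReal.ofReal (N * e) * (ENNReal.ofReal (1 / 2) * ENNReal.ofReal e ^ θ) := by
      rw [ENNReal.ofReal_rpow_of_pos (by positivity), ENNReal.ofReal_rpow_of_pos he,
        ← ENNReal.ofReal_mul (by positivity), ← ENNReal.ofReal_mul (by positivity),
        ← ENNReal.ofReal_mul (by positivity), Real.mul_rpow hN0.le he.le, hNθ]
      congr 1
      ring
    rw [hEe, hB, h2]
    calc _ = M * (ENNReal.ofReal e * ENNReal.ofReal (N * e) ^ θ) := by ring
      _ = _ := by rw [h3]; ring
  have key4 : ENNReal.ofReal ((m + 4 * n) * s) * G * volume E ^ (1 / 2 : ℝ) =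
      ENNReal.ofReal (stepConst m n) * G * volume E ^ θ := by
    have : ENNReal.ofReal ((m + 4 * n) * s) * ENNReal.ofReal e ^ (1 / 2 : ℝ) =
        ENNReal.ofReal (stepConst m n) * ENNReal.ofReal e ^ θ := by
      have hc : 0 ≤ stepConst m n := by
        rw [stepConst, ← hN]; positivity
      rw [ENNReal.ofReal_rpow_of_pos he, ENNReal.ofReal_rpow_of_pos he,
        ← ENNReal.ofReal_mul (by positivity), ← ENNReal.ofReal_mul hc, stepConst, ← hN, ← hQdef,
        hs, hθ, Real.rpow_add he, show N * e / 2 ^ (m + n) = N / 2 ^ (m + n) * e by ring,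
        Real.mul_rpow (by positivity) he.le]
      congr 1
      ring
    rw [hEe, mul_right_comm, this, mul_right_comm]
  rw [key3, ← mul_add, ENNReal.mul_le_mul_iff_right hB0 hBtop, key4, ← add_mul] at key2
  exact key2

/-- A finite starting constant for the iteration: `‖u‖_∞` handles small sets, `‖u‖₁` large ones. -/
lemma exists_weakBound (hm : 1 ≤ m) (hn : 1 ≤ n) {u : Pt m n → ℝ} (hu : Continuous u)
    (hc : HasCompactSupport u) : ∃ M : ENNReal, M ≠ ⊤ ∧ WeakBound u M := by
  obtain ⟨S, hS⟩ := hc.exists_bound_of_continuous hu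
  have hint : ∫⁻ g, ‖u g‖ₑ ≠ ⊤ := (hu.integrable_of_hasCompactSupport hc).2.ne
  have hQ := two_lt_Qh hm hn
  have hα : 1 / Qh m n < 1 / 2 := one_div_lt_one_div_of_lt two_pos hQ
  have hQ' : 0 < 1 / Qh m n := by positivity
  refine ⟨ENNReal.ofReal S + ∫⁻ g, ‖u g‖ₑ, by simp [hint], fun E hE hEtop => ?_⟩
  rcases le_total (volume E) 1 with h | h
  · calc ∫⁻ g in E, ‖u g‖ₑ ≤ ∫⁻ _g in E, ENNReal.ofReal S := by
          refine lintegral_mono fun g => ?_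
          rw [← ofReal_norm]
          exact ENNReal.ofReal_le_ofReal (hS g)
      _ = ENNReal.ofReal S * volume E ^ (1 : ℝ) := by simp
      _ ≤ _ := by
          refine mul_le_mul' le_self_add ?_
          exact ENNReal.rpow_le_rpow_of_exponent_ge h (by linarith)
  · calc ∫⁻ g in E, ‖u g‖ₑ ≤ (∫⁻ g, ‖u g‖ₑ) * 1 := by
          rw [mul_one]; exact setLIntegral_le_lintegral _ _
      _ ≤ _ := by
          refine mul_le_mul' le_add_self ?_
          exact ENNReal.one_le_rpow h (by linarith)

/-- Weak-type Sobolev inequality, the limit of the iterates of `WeakBound.step`. -/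
lemma weakBound_energy (hm : 1 ≤ m) (hn : 1 ≤ n) (hA : IsHType m n A) {u : Pt m n → ℝ}
    (hu : ContDiff ℝ (⊤ : ℕ∞) u) (hc : HasCompactSupport u) :
    WeakBound u (2 * (ENNReal.ofReal (stepConst m n) * energy m n A u ^ (1 / 2 : ℝ))) := by
  obtain ⟨M, hM, hMu⟩ := exists_weakBound hm hn hu.continuous hc
  set K := ENNReal.ofReal (stepConst m n) * energy m n A u ^ (1 / 2 : ℝ) with hK
  have h1 (k : ℕ) : WeakBound u (2 * K + M * (2⁻¹) ^ k) := by
    induction k with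
    | zero =>
      intro E hE hEtop
      refine (hMu E hE hEtop).trans ?_
      gcongr
      simp
    | succ k ih =>
      have h2 := ih.step hm hn hA hu
      rw [← hK] at h2
      convert h2 using 1
      rw [ENNReal.add_div, two_mul, ENNReal.add_div, ← add_assoc, add_assoc K, ENNReal.add_halves,
        pow_succ, ← mul_assoc, div_eq_mul_inv, ← add_assoc]
  intro E hE hEtop
  have hQ := two_lt_Qh hm hn
  have hlim : Tendsto (fun k : ℕ => (2 * K + M * (2⁻¹) ^ k) * volume E ^ (1 / 2 + 1 / Qh m n))
      atTop (nhds ((2 * K + M * 0) * volume E ^ (1 / 2 + 1 / Qh m n))) := by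
    refine ENNReal.Tendsto.mul_const (Tendsto.const_add _ (ENNReal.Tendsto.const_mul
      (ENNReal.tendsto_pow_atTop_nhds_zero_of_lt_one ?_) (Or.inr hM))) (Or.inr ?_)
    · simp
    · exact ENNReal.rpow_ne_top_of_nonneg (by positivity) hEtop
  have h3 := ge_of_tendsto' hlim fun k => h1 k E hE hEtop
  simpa using h3

end WeakType

/-! ### The weight and the passage to a strong inequality -/

section Weighted

variable {m n : ℕ} {A : Fin n → Matrix (Fin m) (Fin m) ℝ}

/-- The base `(1 + |x|²/4)² + |t|²` of the power defining `Uf`. -/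
def hgauge (q : Pt m n) : ℝ := (1 + (∑ i, q.1 i ^ 2) / 4) ^ 2 + ∑ r, q.2 r ^ 2

lemma Uf_eq (q : Pt m n) : Uf m n q = hgauge q ^ (-(Qh m n - 2) / 4) := rfl

lemma sum_sq_ge_norm_sq {ι : Type*} [Fintype ι] (x : ι → ℝ) : ‖x‖ ^ 2 ≤ ∑ i, x i ^ 2 := by
  have h0 : 0 ≤ ∑ i, x i ^ 2 := Finset.sum_nonneg fun i _ => sq_nonneg _
  rw [← Real.le_sqrt (norm_nonneg x) h0, pi_norm_le_iff_of_nonneg (Real.sqrt_nonneg _)]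
  intro i
  refine Real.le_sqrt_of_sq_le ?_
  rw [Real.norm_eq_abs, sq_abs]
  exact Finset.single_le_sum (f := fun i => x i ^ 2) (fun i _ => sq_nonneg _) (Finset.mem_univ i)

lemma le_hgauge_left (q : Pt m n) : ((1 + ‖q.1‖ ^ 2) / 4) ^ 2 ≤ hgauge q := by
  have h1 := sum_sq_ge_norm_sq q.1
  have h2 : 0 ≤ ∑ r, q.2 r ^ 2 := Finset.sum_nonneg fun i _ => sq_nonneg _
  unfold hgauge
  have h3 : ((1 + ‖q.1‖ ^ 2) / 4) ^ 2 ≤ (1 + (∑ i, q.1 i ^ 2) / 4) ^ 2 := by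
    gcongr ?_ ^ 2
    linarith
  linarith

lemma le_hgauge_right (q : Pt m n) : 1 + ‖q.2‖ ^ 2 ≤ hgauge q := by
  have h1 := sum_sq_ge_norm_sq q.2
  have h2 : 0 ≤ ∑ r, q.1 r ^ 2 := Finset.sum_nonneg fun i _ => sq_nonneg _
  unfold hgauge
  nlinarith

lemma one_le_hgauge (q : Pt m n) : 1 ≤ hgauge q := by
  have := le_hgauge_right q
  nlinarith [sq_nonneg ‖q.2‖]

lemma continuous_hgauge : Continuous (hgauge : Pt m n → ℝ) := by
  unfold hgauge; fun_prop

/-- Integrability of `U^(3p*/4) = hgauge^(-3Q/8)`. Splitting `3Q/8 = 3m/8 + 3n/4` bounds the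
integrand by a product of integrable functions of `x` and of `t`. -/
lemma lintegral_hgauge_ne_top (hm : 1 ≤ m) (hn : 1 ≤ n) :
    ∫⁻ q : Pt m n, ENNReal.ofReal (hgauge q ^ (-(3 * Qh m n / 8))) ≠ ⊤ := by
  have hm' : (1 : ℝ) ≤ m := by exact_mod_cast hm
  have hn' : (1 : ℝ) ≤ n := by exact_mod_cast hn
  have hx : Integrable (fun x : Fin m → ℝ => (1 + ‖x‖ ^ 2) ^ (-(3 * m / 2 : ℝ) / 2)) :=
    integrable_rpow_neg_one_add_norm_sq (by rw [Module.finrank_fin_fun]; linarith)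
  have ht : Integrable (fun x : Fin n → ℝ => (1 + ‖x‖ ^ 2) ^ (-(3 * n / 2 : ℝ) / 2)) :=
    integrable_rpow_neg_one_add_norm_sq (by rw [Module.finrank_fin_fun]; linarith)
  have hxt := (hx.const_mul ((4 : ℝ) ^ (3 * m / 4 : ℝ))).mul_prod ht
  refine ne_of_lt (lt_of_le_of_lt (lintegral_mono fun q => ?_) hxt.lintegral_lt_top)
  refine ENNReal.ofReal_le_ofReal ?_
  have h1 := one_le_hgauge q
  have h0 : 0 < hgauge q := by linarith
  have e1 : hgauge q ^ (-(3 * Qh m n / 8)) =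
      hgauge q ^ (-(3 * m / 8 : ℝ)) * hgauge q ^ (-(3 * n / 2 : ℝ) / 2) := by
    rw [← Real.rpow_add h0, Qh]; congr 1; ring
  rw [e1]
  gcongr ?_ * ?_
  · calc hgauge q ^ (-(3 * m / 8 : ℝ))
        ≤ (((1 + ‖q.1‖ ^ 2) / 4) ^ 2) ^ (-(3 * m / 8 : ℝ)) :=
          Real.rpow_le_rpow_of_nonpos (by positivity) (le_hgauge_left q)
            (neg_nonpos.2 (by positivity))
      _ = 4 ^ (3 * m / 4 : ℝ) * (1 + ‖q.1‖ ^ 2) ^ (-(3 * m / 2 : ℝ) / 2) := by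
          rw [← Real.rpow_natCast, ← Real.rpow_mul (by positivity),
            Real.div_rpow (by positivity) (by norm_num), div_eq_mul_inv,
            ← Real.rpow_neg (by norm_num), mul_comm]
          congr 2 <;> push_cast <;> ring
  · exact Real.rpow_le_rpow_of_nonpos (by positivity) (le_hgauge_right q)
      (by rw [neg_div]; exact neg_nonpos.2 (by positivity))

/-- The critical exponent `p* = 2Q/(Q-2)`. -/
def critExp (m n : ℕ) : ℝ := 2 * Qh m n / (Qh m n - 2)

/-- The weight `U^(p* - p)`. -/
def wt (m n : ℕ) (p : ℝ) (q : Pt m n) : ℝ := Uf m n q ^ (critExp m n - p)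

/-- Lebesgue measure weighted by `U^(p* - p)`. -/
def wMeas (m n : ℕ) (p : ℝ) : Measure (Pt m n) :=
  volume.withDensity fun q => ENNReal.ofReal (wt m n p q)

lemma Uf_pos (q : Pt m n) : 0 < Uf m n q :=
  Real.rpow_pos_of_pos (zero_lt_one.trans_le (one_le_hgauge q)) _

lemma wt_pos (p : ℝ) (q : Pt m n) : 0 < wt m n p q := Real.rpow_pos_of_pos (Uf_pos q) _

lemma continuous_wt (p : ℝ) : Continuous (wt m n p) := by
  have h (q : Pt m n) : hgauge q ≠ 0 := by linarith [one_le_hgauge q]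
  exact (continuous_hgauge.rpow_const fun q => Or.inl (h q)).rpow_const
    fun q => Or.inl (Uf_pos q).ne'

lemma wt_le_one (hm : 1 ≤ m) (hn : 1 ≤ n) {p : ℝ} (hp : p < critExp m n) (q : Pt m n) :
    wt m n p q ≤ 1 := by
  have hQ := two_lt_Qh hm hn
  refine Real.rpow_le_one (Uf_pos q).le ?_ (by linarith)
  rw [Uf_eq]
  exact Real.rpow_le_one_of_one_le_of_nonpos (one_le_hgauge q) (by linarith)

lemma wMeas_le_volume (hm : 1 ≤ m) (hn : 1 ≤ n) {p : ℝ} (hp : p < critExp m n)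
    {E : Set (Pt m n)} (hE : MeasurableSet E) : wMeas m n p E ≤ volume E := by
  rw [wMeas, withDensity_apply _ hE]
  calc _ ≤ ∫⁻ _q in E, 1 := lintegral_mono fun q =>
        ENNReal.ofReal_le_one.2 (wt_le_one hm hn hp q)
    _ = _ := by simp

/-- Hölder's inequality with exponent `a = 3p*/(4(p* - p))`, for which the `a`-th power of the weight
is `U^(3p*/4)`. -/
lemma exists_wMeas_le_rpow (hm : 1 ≤ m) (hn : 1 ≤ n) {p : ℝ} (hp1 : 2 ≤ p)
    (hp : p < critExp m n) :
    ∃ K : ENNReal, K ≠ ⊤ ∧ ∀ E : Set (Pt m n), MeasurableSet E →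
      wMeas m n p E ≤ K * volume E ^ ((4 * p - critExp m n) / (3 * critExp m n)) := by
  have hm' : (1 : ℝ) ≤ m := by exact_mod_cast hm
  have hn' : (1 : ℝ) ≤ n := by exact_mod_cast hn
  have hQ := two_lt_Qh hm hn
  have hQ3 : 3 ≤ Qh m n := by unfold Qh; linarith
  have hcpos : 0 < critExp m n := by linarith
  have hd : 0 < critExp m n - p := by linarith
  have hcQ : critExp m n * (Qh m n - 2) = 2 * Qh m n := by
    rw [critExp]; field_simp [show Qh m n - 2 ≠ 0 by linarith]
  -- Together with `2 ≤ p` this gives `a > 1`.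
  have hc8 : critExp m n < 8 := by
    rw [critExp, div_lt_iff₀ (by linarith)]; linarith
  set a : ℝ := 3 * critExp m n / (4 * (critExp m n - p)) with ha
  have ha1 : 1 < a := by
    rw [ha, one_lt_div (by linarith)]; linarith
  have hconj := Real.HolderConjugate.conjExponent ha1
  refine ⟨(∫⁻ q : Pt m n, ENNReal.ofReal (hgauge q ^ (-(3 * Qh m n / 8)))) ^ (1 / a),
    ENNReal.rpow_ne_top_of_nonneg (by positivity) (lintegral_hgauge_ne_top hm hn),
    fun E hE => ?_⟩
  rw [wMeas, withDensity_apply _ hE]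
  have hw : Measurable fun q => ENNReal.ofReal (wt m n p q) :=
    (continuous_wt p).measurable.ennreal_ofReal
  have h1 := ENNReal.lintegral_mul_le_Lp_mul_Lq (volume.restrict E) hconj
    (f := fun q => ENNReal.ofReal (wt m n p q)) (g := fun _ => 1) hw.aemeasurable
    aemeasurable_const
  have hexp : 1 / Real.conjExponent a = (4 * p - critExp m n) / (3 * critExp m n) := by
    rw [one_div, ← hconj.one_sub_inv, ha]
    field_simp
    ring
  simp only [Pi.mul_apply, mul_one, ENNReal.one_rpow, lintegral_const, one_mul,
    Measure.restrict_apply_univ, hexp] at h1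
  refine h1.trans ?_
  gcongr ?_ ^ _ * _
  refine (setLIntegral_le_lintegral _ _).trans (lintegral_mono fun q => ?_)
  have h0 : 0 < hgauge q := by linarith [one_le_hgauge q]
  rw [ENNReal.ofReal_rpow_of_pos (wt_pos p q), wt, ← Real.rpow_mul (Uf_pos q).le,
    Uf_eq, ← Real.rpow_mul h0.le]
  refine le_of_eq ?_
  congr 2
  have : (critExp m n - p) * a = 3 * critExp m n / 4 := by
    rw [ha]; field_simp
  rw [this]
  linear_combination (-3 / 16) * hcQ

lemma volume_superlevel_le (hm : 1 ≤ m) (hn : 1 ≤ n) {u : Pt m n → ℝ} (hu : Continuous u)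
    (hc : HasCompactSupport u) {M : ℝ} (hM : 0 < M) (hMu : WeakBound u (ENNReal.ofReal M))
    {t : ℝ} (ht : 0 < t) :
    volume {q | t < |u q| / M} ≤ ENNReal.ofReal (t ^ (-critExp m n)) := by
  have hQ := two_lt_Qh hm hn
  set E := {q | t < |u q| / M} with hEdef
  have hE : MeasurableSet E := (isOpen_lt continuous_const (by fun_prop)).measurableSet
  have hEtop : volume E ≠ ⊤ := by
    refine ne_of_lt (lt_of_le_of_lt (measure_mono ?_) hc.isCompact.measure_lt_top)
    intro q hq
    refine subset_tsupport u ?_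
    intro h0
    simp only [hEdef, Set.mem_ofPred_eq, h0, abs_zero, zero_div] at hq
    linarith
  rcases eq_or_ne (volume E) 0 with h0 | h0
  · rw [h0]; exact zero_le
  obtain ⟨e, he, hEe⟩ : ∃ e : ℝ, 0 < e ∧ volume E = ENNReal.ofReal e :=
    ⟨(volume E).toReal, ENNReal.toReal_pos h0 hEtop, (ENNReal.ofReal_toReal hEtop).symm⟩
  have h1 : ENNReal.ofReal (t * M) * volume E ≤
      ENNReal.ofReal M * volume E ^ (1 / 2 + 1 / Qh m n) := by
    refine le_trans ?_ (hMu E hE hEtop)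
    rw [← setLIntegral_const]
    refine setLIntegral_mono' hE fun q hq => ?_
    rw [Real.enorm_eq_ofReal_abs]
    exact ENNReal.ofReal_le_ofReal ((lt_div_iff₀ hM).1 hq).le
  rw [hEe, ENNReal.ofReal_rpow_of_pos he, ← ENNReal.ofReal_mul (by positivity),
    ← ENNReal.ofReal_mul (by positivity), ENNReal.ofReal_le_ofReal_iff (by positivity)] at h1
  rw [hEe]
  refine ENNReal.ofReal_le_ofReal ?_
  have hα : 0 < 1 / 2 - 1 / Qh m n := by
    rw [sub_pos]; exact one_div_lt_one_div_of_lt two_pos hQ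
  have hcα : (1 / 2 - 1 / Qh m n) * critExp m n = 1 := by
    rw [critExp]
    field_simp [show Qh m n - 2 ≠ 0 by linarith, show Qh m n ≠ 0 by linarith]
  have hcpos : 0 < critExp m n := by
    by_contra h; nlinarith
  have h2 : e ^ (1 / 2 - 1 / Qh m n) ≤ t⁻¹ := by
    have h3 : e = e ^ (1 / 2 + 1 / Qh m n) * e ^ (1 / 2 - 1 / Qh m n) := by
      rw [← Real.rpow_add he]; ring_nf; simp
    have h4 := Real.rpow_pos_of_pos he (1 / 2 + 1 / Qh m n)
    have h5 : t * e ≤ e ^ (1 / 2 + 1 / Qh m n) := by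
      have : M * (t * e) ≤ M * e ^ (1 / 2 + 1 / Qh m n) := by linarith
      exact le_of_mul_le_mul_left this hM
    rw [← one_div, le_div_iff₀ ht]
    by_contra! h6
    have := mul_lt_mul_of_pos_left h6 h4
    nlinarith
  calc e = (e ^ (1 / 2 - 1 / Qh m n)) ^ critExp m n := by
        rw [← Real.rpow_mul he.le, hcα, Real.rpow_one]
    _ ≤ (t⁻¹) ^ critExp m n := Real.rpow_le_rpow (by positivity) h2 hcpos.le
    _ = t ^ (-critExp m n) := by rw [Real.inv_rpow ht.le, Real.rpow_neg ht.le]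

/-- A weak-type bound gives a weighted `L^p` bound for `2 ≤ p < p*`, with a constant independent of
the function; `u` is normalised by the weak constant `M`. -/
lemma exists_lintegral_weighted_le (hm : 1 ≤ m) (hn : 1 ≤ n) {p : ℝ} (hp1 : 2 ≤ p)
    (hp : p < critExp m n) :
    ∃ C : ENNReal, C ≠ ⊤ ∧ ∀ u : Pt m n → ℝ, Continuous u → HasCompactSupport u →
      ∀ M : ℝ, 0 < M → WeakBound u (ENNReal.ofReal M) →
        ∫⁻ q, ENNReal.ofReal ((|u q| / M) ^ p * wt m n p q) ≤ C := by
  obtain ⟨K, hK, hKE⟩ := exists_wMeas_le_rpow hm hn hp1 hp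
  have hcpos : 0 < critExp m n := by linarith
  -- With `2 ≤ p` this makes the Hölder exponent `(4p - p*)/(3p*)` nonnegative.
  have hc8 : critExp m n < 8 := by
    have hm' : (1 : ℝ) ≤ m := by exact_mod_cast hm
    have hn' : (1 : ℝ) ≤ n := by exact_mod_cast hn
    have hQ3 : 3 ≤ Qh m n := by unfold Qh; linarith
    rw [critExp, div_lt_iff₀ (by linarith)]; linarith
  -- The exponent of `t` near `0`, after Hölder's inequality; it exceeds `-1` because `p < p*`.
  set b : ℝ := (critExp m n - p) / 3 - 1 with hb
  have hI1 : ∫⁻ t in Set.Ioc (0 : ℝ) 1, ENNReal.ofReal (t ^ b) ≠ ⊤ := by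
    have : IntegrableOn (fun t : ℝ => t ^ b) (Set.Ioc 0 1) :=
      (intervalIntegrable_iff_integrableOn_Ioc_of_le zero_le_one).1
        (intervalIntegral.intervalIntegrable_rpow' (by linarith))
    exact this.lintegral_lt_top.ne
  have hI2 : ∫⁻ t in Set.Ioi (1 : ℝ), ENNReal.ofReal (t ^ (p - 1 - critExp m n)) ≠ ⊤ :=
    (integrableOn_Ioi_rpow_of_lt (by linarith) zero_lt_one).lintegral_lt_top.ne
  refine ⟨ENNReal.ofReal p * (K * (∫⁻ t in Set.Ioc (0 : ℝ) 1, ENNReal.ofReal (t ^ b)) +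
    ∫⁻ t in Set.Ioi (1 : ℝ), ENNReal.ofReal (t ^ (p - 1 - critExp m n))),
    ENNReal.mul_ne_top ENNReal.ofReal_ne_top (ENNReal.add_ne_top.2 ⟨ENNReal.mul_ne_top hK hI1, hI2⟩),
    fun u hu hc M hM hMu => ?_⟩
  have hfc : Continuous fun q => |u q| / M := by fun_prop
  have hEm (t : ℝ) : MeasurableSet {q | t < |u q| / M} :=
    (isOpen_lt continuous_const hfc).measurableSet
  have h1 : ∫⁻ q, ENNReal.ofReal ((|u q| / M) ^ p * wt m n p q) =
      ∫⁻ q, ENNReal.ofReal ((|u q| / M) ^ p) ∂(wMeas m n p) := by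
    rw [wMeas, lintegral_withDensity_eq_lintegral_mul _
      (continuous_wt p).measurable.ennreal_ofReal
      ((hfc.rpow_const fun _ => Or.inr (by linarith)).measurable.ennreal_ofReal)]
    refine lintegral_congr fun q => ?_
    rw [mul_comm, ENNReal.ofReal_mul (wt_pos p q).le]
    rfl
  rw [h1, lintegral_rpow_eq_lintegral_meas_lt_mul _
    (Eventually.of_forall fun q => by positivity) hfc.measurable.aemeasurable (by linarith)]
  gcongr
  rw [← Set.Ioc_union_Ioi_eq_Ioi (zero_le_one' ℝ),
    lintegral_union measurableSet_Ioi (Set.Ioc_disjoint_Ioi le_rfl)]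
  refine add_le_add ?_ ?_
  · rw [← lintegral_const_mul' _ _ hK]
    refine setLIntegral_mono' measurableSet_Ioc fun t ht => ?_
    have ht0 : 0 < t := ht.1
    calc _ ≤ K * volume {q | t < |u q| / M} ^ ((4 * p - critExp m n) / (3 * critExp m n)) *
          ENNReal.ofReal (t ^ (p - 1)) := by gcongr; exact hKE _ (hEm t)
      _ ≤ K * ENNReal.ofReal (t ^ (-critExp m n)) ^ ((4 * p - critExp m n) / (3 * critExp m n)) *
          ENNReal.ofReal (t ^ (p - 1)) := by
          gcongr
          · exact div_nonneg (by linarith) (by linarith)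
          · exact volume_superlevel_le hm hn hu hc hM hMu ht0
      _ = K * ENNReal.ofReal (t ^ b) := by
          rw [ENNReal.ofReal_rpow_of_pos (by positivity), ← Real.rpow_mul ht0.le, mul_assoc,
            ← ENNReal.ofReal_mul (by positivity), ← Real.rpow_add ht0]
          congr 3
          rw [hb]
          field_simp
          ring
  · refine setLIntegral_mono' measurableSet_Ioi fun t ht => ?_
    have ht0 : 0 < t := zero_lt_one.trans ht
    calc _ ≤ ENNReal.ofReal (t ^ (-critExp m n)) * ENNReal.ofReal (t ^ (p - 1)) := by
          gcongr
          exact (wMeas_le_volume hm hn hp (hEm t)).trans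
            (volume_superlevel_le hm hn hu hc hM hMu ht0)
      _ = _ := by
          rw [← ENNReal.ofReal_mul (by positivity), ← Real.rpow_add ht0]
          congr 2
          ring

end Weighted

/-- **Subcritical Sobolev inequality (Lemma 3.1)**. -/
theorem subcritical_sobolev (m n : ℕ) (hm : 1 ≤ m) (hn : 1 ≤ n)
    (A : Fin n → Matrix (Fin m) (Fin m) ℝ) (hA : IsHType m n A)
    (p : ℝ) (hp1 : 2 ≤ p) (hp2 : p < 2 * Qh m n / (Qh m n - 2)) :
    ∃ C : ℝ, 0 < C ∧ ∀ u : Pt m n → ℝ, ContDiff ℝ (⊤ : ℕ∞) u → HasCompactSupport u →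
      C * (∫ q : Pt m n,
              |u q| ^ p * Uf m n q ^ (2 * Qh m n / (Qh m n - 2) - p)) ^ (2 / p)
        ≤ ∫ q : Pt m n, gradSq m n A u q := by
  change p < critExp m n at hp2
  obtain ⟨C₀, hC₀, hC⟩ := exists_lintegral_weighted_le hm hn hp1 hp2
  have hk : 0 < stepConst m n := by
    have hm' : (1 : ℝ) ≤ m := by exact_mod_cast hm
    rw [stepConst, ratioConst]; positivity
  set k := stepConst m n with hkdef
  set C₁ : ℝ := C₀.toReal + 1 with hC₁
  have hC₁0 : 0 < C₁ := by positivity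
  have hp0 : 0 < p := by linarith
  refine ⟨1 / (C₁ ^ (2 / p) * (4 * k ^ 2)), by positivity, fun u hu hc => ?_⟩
  change _ * (∫ q : Pt m n, |u q| ^ p * wt m n p q) ^ (2 / p) ≤ _
  have hgc := continuous_gradSq (A := A) hu
  have hgnn (q : Pt m n) : 0 ≤ gradSq m n A u q := Finset.sum_nonneg fun j _ => sq_nonneg _
  have hgs : HasCompactSupport (gradSq m n A u) := by
    refine (hc.fderiv (𝕜 := ℝ)).mono' ?_
    intro q hq
    refine subset_tsupport _ fun h0 => hq ?_
    simp [gradSq, Xvf, h0]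
  have hen : energy m n A u = ENNReal.ofReal (∫ q, gradSq m n A u q) :=
    (ofReal_integral_eq_lintegral_ofReal (hgc.integrable_of_hasCompactSupport hgs)
      (Eventually.of_forall hgnn)).symm
  set D : ℝ := ∫ q, gradSq m n A u q with hD
  have hD0 : 0 ≤ D := integral_nonneg hgnn
  refine le_of_forall_pos_le_add fun ε hε => ?_
  -- The shift by `ε` keeps `M` positive when the energy vanishes.
  set M : ℝ := 2 * (k * √(D + ε)) with hM
  have hM0 : 0 < M := by positivity
  have hMsq : M ^ 2 = 4 * k ^ 2 * (D + ε) := by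
    rw [hM, mul_pow, mul_pow, Real.sq_sqrt (by linarith)]; ring
  have hweak : WeakBound u (ENNReal.ofReal M) := by
    intro E hE hEtop
    refine (weakBound_energy hm hn hA hu hc E hE hEtop).trans ?_
    gcongr
    rw [hen, hM, ENNReal.ofReal_mul two_pos.le, ENNReal.ofReal_mul hk.le, Real.sqrt_eq_rpow,
      ← ENNReal.ofReal_rpow_of_nonneg (by linarith) (by norm_num), ENNReal.ofReal_ofNat]
    gcongr
    linarith
  have h1 := hC u hu.continuous hc M hM0 hweak
  have hcont : Continuous fun q => (|u q| / M) ^ p * wt m n p q :=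
    ((hu.continuous.abs.div_const M).rpow_const fun _ => Or.inr hp0.le).mul (continuous_wt p)
  have h2 : ∫ q, (|u q| / M) ^ p * wt m n p q ≤ C₁ := by
    rw [integral_eq_lintegral_of_nonneg_ae
      (Eventually.of_forall fun q => mul_nonneg (by positivity) (wt_pos p q).le)
      hcont.aestronglyMeasurable]
    exact (ENNReal.toReal_mono hC₀ h1).trans (by linarith)
  have h3 : ∫ q, |u q| ^ p * wt m n p q = M ^ p * ∫ q, (|u q| / M) ^ p * wt m n p q := by
    rw [← integral_const_mul]
    refine integral_congr_ae (Eventually.of_forall fun q => ?_)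
    simp only
    rw [Real.div_rpow (abs_nonneg _) hM0.le]
    field_simp
  have h4 : 0 ≤ ∫ q, (|u q| / M) ^ p * wt m n p q :=
    integral_nonneg fun q => mul_nonneg (by positivity) (wt_pos p q).le
  have h5 : (∫ q, |u q| ^ p * wt m n p q) ^ (2 / p) ≤ M ^ 2 * C₁ ^ (2 / p) := by
    rw [h3, Real.mul_rpow (by positivity) h4, ← Real.rpow_mul hM0.le, mul_div_cancel₀ _ hp0.ne']
    rw [Real.rpow_two]
    gcongr
  calc _ ≤ 1 / (C₁ ^ (2 / p) * (4 * k ^ 2)) * (M ^ 2 * C₁ ^ (2 / p)) := by gcongr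
    _ = D + ε := by
      rw [hMsq]
      have := Real.rpow_pos_of_pos hC₁0 (2 / p)
      field_simp
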